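/- There is an absolute constant C > 0 such that the following holds. Let G be an abelian group, let A ⊆ G be a finite set with |A| ≥ 2, let B ⊆ G be a finite set, and let K ≥ 1 be a real number with |B + A| ≤ K|A|. Then there is a finite set L ⊆ G such that B ⊆ Span(L) and |L| ≤ C·K·log|A|. -/

import Mathlib

/-!
Take `L` to be a maximal dissociated subset of `B`. Adding any further `b ∈ B` creates a relation
between two subset sums, and solving it for `b` shows `b ∈ Span L`. On the other hand, distinct
`p`-element subsets of `L` have distinct sums, all lying in the `p`-fold sumset of `B`, which by the
Plünnecke–Ruzsa inequality has at most `K ^ p * |A|` elements. Thus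
`(|L| / p) ^ p ≤ (|L|.choose p) ≤ K ^ p * |A|` for `p ≤ |L|`, and `p = ⌈log |A|⌉` makes the factor
`|A| ^ (1 / p)` at most `e`.
-/

open Pointwise

/-- The span of a finite set `L`: all sums `∑_{x ∈ L} σ_x • x` with `σ_x ∈ {-1,0,1}`. -/
def Span {G : Type*} [AddCommGroup G] (L : Finset G) : Set G :=
  {y | ∃ σ : G → ℤ, (∀ x, σ x = -1 ∨ σ x = 0 ∨ σ x = 1) ∧ y = ∑ x ∈ L, σ x • x}

section Span

open Finset

variable {G : Type*} [AddCommGroup G]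

theorem sum_sub_sum_mem_span {L t u : Finset G} (ht : t ⊆ L) (hu : u ⊆ L) :
    ∑ x ∈ t, x - ∑ x ∈ u, x ∈ Span L := by
  classical
  refine ⟨fun x ↦ (if x ∈ t then 1 else 0) - (if x ∈ u then 1 else 0), fun x ↦ ?_, ?_⟩
  · by_cases x ∈ t <;> by_cases x ∈ u <;> simp [*]
  · simp [sub_smul, ite_smul, inter_eq_right.2 ht, inter_eq_right.2 hu]

theorem subset_span (L : Finset G) : (L : Set G) ⊆ Span L := fun x hx ↦ by
  simpa using sum_sub_sum_mem_span (singleton_subset_iff.2 hx) (empty_subset L)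

theorem mem_span_of_not_addDissociated_insert [DecidableEq G] {L : Finset G} {b : G}
    (hL : AddDissociated (L : Set G))
    (hb : ¬ AddDissociated ((insert b L : Finset G) : Set G)) : b ∈ Span L := by
  obtain ⟨t, u, ht, hu, hdisj, hne, hsum⟩ := not_addDissociated_iff_exists_disjoint.1 hb
  rw [coe_subset] at ht hu
  wlog hbt : b ∈ t generalizing t u
  · by_cases hbu : b ∈ u
    · exact this u t hu ht hdisj.symm hne.symm hsum.symm hbu
    · rw [subset_insert_iff_of_notMem hbt] at ht
      rw [subset_insert_iff_of_notMem hbu] at hu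
      exact absurd (hL (coe_subset.2 ht) (coe_subset.2 hu) hsum) hne
  have hbu : b ∉ u := disjoint_left.1 hdisj hbt
  have hb_eq : b = ∑ x ∈ u, x - ∑ x ∈ t.erase b, x := by
    rw [← hsum, ← add_sum_erase t (fun x ↦ x) hbt, add_sub_cancel_right]
  rw [hb_eq]
  exact sum_sub_sum_mem_span ((subset_insert_iff_of_notMem hbu).1 hu) (subset_insert_iff.1 ht)

theorem subset_span_of_maximal_addDissociated {B L : Finset G}
    (hL : Maximal (fun L : Finset G ↦ L ⊆ B ∧ AddDissociated (L : Set G)) L) :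
    (B : Set G) ⊆ Span L := by
  classical
  intro b hb
  by_cases hbL : b ∈ L
  · exact subset_span L hbL
  · exact mem_span_of_not_addDissociated_insert hL.prop.2 fun h ↦
      hL.not_prop_of_gt (ssubset_insert hbL) ⟨insert_subset hb hL.prop.1, h⟩

theorem exists_addDissociated_subset_span (B : Finset G) :
    ∃ L ⊆ B, AddDissociated (L : Set G) ∧ (B : Set G) ⊆ Span L := by
  have hfin : {L : Finset G | L ⊆ B ∧ AddDissociated (L : Set G)}.Finite :=
    B.powerset.finite_toSet.subset fun _ hL ↦ mem_coe.2 (mem_powerset.2 hL.1)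
  obtain ⟨L, hL⟩ := hfin.exists_maximal ⟨∅, empty_subset B, by simp⟩
  exact ⟨L, hL.prop.1, hL.prop.2, subset_span_of_maximal_addDissociated hL⟩

end Span

section Counting

open Finset

theorem pow_le_pow_self_mul_choose {n k : ℕ} (h : k ≤ n) : n ^ k ≤ k ^ k * n.choose k := by
  refine Nat.le_of_mul_le_mul_left ?_ k.factorial_pos
  calc k.factorial * n ^ k = ∏ i ∈ range k, (k - i) * n := by
        rw [prod_mul_distrib, prod_const, card_range, ← Nat.descFactorial_eq_prod_range,
          Nat.descFactorial_self]
    _ ≤ ∏ i ∈ range k, (n - i) * k := by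
        refine prod_le_prod' fun i _ ↦ ?_
        rw [Nat.sub_mul, Nat.sub_mul, mul_comm n k]
        gcongr
    _ = k.factorial * (k ^ k * n.choose k) := by
        rw [prod_mul_distrib, prod_const, card_range, ← Nat.descFactorial_eq_prod_range,
          Nat.descFactorial_eq_factorial_mul_choose]
        ring

-- Natural multiples of a finset, here and below, are iterated sumsets, not dilates.
theorem sum_mem_card_nsmul {M : Type*} [AddCommMonoid M] [DecidableEq M] {B t : Finset M}
    (ht : t ⊆ B) : ∑ x ∈ t, x ∈ #t • B := by
  rw [← mem_coe, coe_nsmul, ← sum_const]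
  exact Set.finsetSum_mem_finsetSum t _ _ fun x hx ↦ ht hx

variable {G : Type*} [AddCommGroup G] [DecidableEq G] {A B L : Finset G} {K : ℝ}

theorem choose_card_le_card_nsmul (hLB : L ⊆ B) (hL : AddDissociated (L : Set G)) (p : ℕ) :
    (#L).choose p ≤ #(p • B) := by
  rw [← card_powersetCard]
  refine card_le_card_of_injOn (fun t ↦ ∑ x ∈ t, x) (fun t ht ↦ ?_) (hL.mono fun t ht ↦ ?_)
  · obtain ⟨htL, rfl⟩ := mem_powersetCard.1 (mem_coe.1 ht)
    exact sum_mem_card_nsmul (htL.trans hLB)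
  · exact coe_subset.2 (mem_powersetCard.1 (mem_coe.1 ht)).1

theorem card_nsmul_le_of_card_add_le (hA : A.Nonempty) (hAB : (#(B + A) : ℝ) ≤ K * #A) (p : ℕ) :
    (#(p • B) : ℝ) ≤ K ^ p * #A := by
  have hK : (#(A + B) / #A : ℝ) ≤ K := by
    rwa [div_le_iff₀ (by exact_mod_cast hA.card_pos), add_comm]
  calc (#(p • B) : ℝ) ≤ (#(A + B) / #A : ℝ) ^ p * #A := by
        simpa using (NNRat.cast_le (K := ℝ)).2 (pluennecke_ruzsa_inequality_nsmul_add hA B p)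
    _ ≤ K ^ p * #A := by gcongr

theorem card_pow_le_of_addDissociated (hA : A.Nonempty) (hAB : (#(B + A) : ℝ) ≤ K * #A)
    (hLB : L ⊆ B) (hL : AddDissociated (L : Set G)) {p : ℕ} (hp : p ≤ #L) :
    (#L : ℝ) ^ p ≤ (p * K) ^ p * #A := by
  calc (#L : ℝ) ^ p ≤ p ^ p * (#L).choose p := by exact_mod_cast pow_le_pow_self_mul_choose hp
    _ ≤ p ^ p * #(p • B) := by gcongr; exact choose_card_le_card_nsmul hLB hL p
    _ ≤ p ^ p * (K ^ p * #A) := by gcongr; exact card_nsmul_le_of_card_add_le hA hAB p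
    _ = (p * K) ^ p * #A := by ring

theorem card_le_of_addDissociated_of_card_le_exp (hA : A.Nonempty) (hK : 1 ≤ K)
    (hAB : (#(B + A) : ℝ) ≤ K * #A) (hLB : L ⊆ B) (hL : AddDissociated (L : Set G)) {p : ℕ}
    (hp : p ≠ 0) (hAp : (#A : ℝ) ≤ Real.exp p) : (#L : ℝ) ≤ p * K * Real.exp 1 := by
  obtain hLp | hpL := lt_or_ge (#L) p
  · calc (#L : ℝ) ≤ p * 1 * 1 := by rw [mul_one, mul_one]; exact_mod_cast hLp.le
      _ ≤ p * K * Real.exp 1 := by gcongr; exact Real.one_le_exp zero_le_one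
  · refine le_of_pow_le_pow_left₀ hp (by positivity) ?_
    calc (#L : ℝ) ^ p ≤ (p * K) ^ p * #A := card_pow_le_of_addDissociated hA hAB hLB hL hpL
      _ ≤ (p * K) ^ p * Real.exp p := by gcongr
      _ = (p * K * Real.exp 1) ^ p := by rw [mul_pow _ (Real.exp 1), Real.exp_one_pow]

theorem card_le_log_of_addDissociated (hA : 2 ≤ #A) (hK : 1 ≤ K)
    (hAB : (#(B + A) : ℝ) ≤ K * #A) (hLB : L ⊆ B) (hL : AddDissociated (L : Set G)) :
    (#L : ℝ) ≤ 2 * Real.exp 1 * K * Real.log #A := by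
  have hlog : 2⁻¹ < Real.log #A := calc
    2⁻¹ < Real.log 2 := by linarith [Real.log_two_gt_d9]
    _ ≤ Real.log #A := by gcongr; exact_mod_cast hA
  have hp : ⌈Real.log #A⌉₊ ≠ 0 := (Nat.ceil_pos.2 (by linarith)).ne'
  have hAp : (#A : ℝ) ≤ Real.exp ⌈Real.log #A⌉₊ :=
    (Real.log_le_iff_le_exp (by positivity)).1 (Nat.le_ceil _)
  calc (#L : ℝ) ≤ ⌈Real.log #A⌉₊ * K * Real.exp 1 :=
        card_le_of_addDissociated_of_card_le_exp (card_pos.1 (by lia)) hK hAB hLB hL hp hAp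
    _ ≤ 2 * Real.log #A * K * Real.exp 1 := by gcongr; exact (Nat.ceil_lt_two_mul hlog).le
    _ = 2 * Real.exp 1 * K * Real.log #A := by ring

theorem asymmetric_shkredov_general (hA : 2 ≤ #A) (hK : 1 ≤ K)
    (hAB : (#(B + A) : ℝ) ≤ K * #A) :
    ∃ L ⊆ B, (B : Set G) ⊆ Span L ∧ (#L : ℝ) ≤ 2 * Real.exp 1 * K * Real.log #A := by
  obtain ⟨L, hLB, hL, hspan⟩ := exists_addDissociated_subset_span B
  exact ⟨L, hLB, hspan, card_le_log_of_addDissociated hA hK hAB hLB hL⟩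

end Counting

theorem asymmetric_shkredov :
    ∃ C : ℝ, 0 < C ∧
      ∀ (G : Type) [AddCommGroup G] [DecidableEq G] (A B : Finset G) (K : ℝ),
        2 ≤ A.card → 1 ≤ K → ((B + A).card : ℝ) ≤ K * A.card →
        ∃ L : Finset G,
          (↑B : Set G) ⊆ Span L ∧ (L.card : ℝ) ≤ C * K * Real.log A.card := by
  refine ⟨2 * Real.exp 1, by positivity, fun G _ _ A B K hA hK hAB ↦ ?_⟩
  obtain ⟨L, -, hL⟩ := asymmetric_shkredov_general hA hK hAB
  exact ⟨L, hL⟩
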